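/- Let d ≥ 1, 0 < λ < d, 2 < p < ∞, and let f_n, f be measurable functions on ℝ^d such that f_n(x) → f(x) for a.e. x ∈ ℝ^d, sup_n I_λ(f_n) < ∞ and sup_n ‖f_n‖_{L^p} < ∞. Then ∬_{ℝ^d×ℝ^d} |f_n(x)|² |f(y)|² |x−y|^{−λ} dx dy → ∬_{ℝ^d×ℝ^d} |f(x)|² |f(y)|² |x−y|^{−λ} dx dy as n → ∞. -/

import Mathlib

open MeasureTheory Filter ENNReal

noncomputable section

/-- The Riesz energy `I_λ(g) = ∬ |g(x)|² |g(y)|² |x-y|^{-λ} dx dy`. -/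
def rieszEnergy (d : ℕ) (lam : ℝ) (g : EuclideanSpace ℝ (Fin d) → ℂ) : ℝ≥0∞ :=
  ∫⁻ x, ∫⁻ y, (‖g x‖₊ : ℝ≥0∞) ^ 2 * (‖g y‖₊ : ℝ≥0∞) ^ 2 *
    ENNReal.ofReal (‖x - y‖ ^ (-lam))

/-!
The Riesz kernel `|x - y|^{-λ}` is comparable to `J(x, y) = ∫₀^∞ r^{-λ-d-1} |B(x, r) ∩ B(y, r)| dr`,
that is, to the measure of the set of balls containing both `x` and `y`, for a suitable measure `ν`
on the space of balls. By Tonelli the mutual `J`-energy of two densities `u` and `v` is the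
`L²(ν)`-pairing of their ball masses `∫_B u` and `∫_B v`. The `L^p` bound, `p > 2`, makes the masses
of `|f_n|²` converge on every ball, and the energy bound makes them bounded in `L²(ν)`, so they
converge weakly and the mixed `J`-energies converge. Finally `|x - y|^{-λ} ≤ C J(x, y)`, and Fatou's
lemma applied to both `|x - y|^{-λ}` and `C J(x, y) - |x - y|^{-λ}` passes the convergence on to the
Riesz kernel.
-/

open Set Topology

section Limits

variable {ι : Type*} {l : Filter ι} {a b : ι → ℝ≥0∞} {a₀ b₀ : ℝ≥0∞}

theorem limsup_add_liminf_le [l.NeBot] : limsup a l + liminf b l ≤ limsup (a + b) l := by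
  rw [liminf_eq_iSup_iInf, ENNReal.add_biSup' ⟨univ, univ_mem⟩]
  refine iSup₂_le fun s hs ↦ ?_
  rw [← limsup_add_const l a _ (by isBoundedDefault) (by isBoundedDefault)]
  refine limsup_le_limsup ?_
  filter_upwards [hs] with i hi
  exact add_le_add_right (iInf₂_le i hi) (a i)

theorem tendsto_of_tendsto_add_of_le_liminf [l.NeBot]
    (hab : Tendsto (fun i ↦ a i + b i) l (𝓝 (a₀ + b₀))) (hfin : a₀ + b₀ ≠ ⊤)
    (ha : a₀ ≤ liminf a l) (hb : b₀ ≤ liminf b l) : Tendsto a l (𝓝 a₀) := by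
  refine tendsto_of_le_liminf_of_limsup_le ha ?_
  have hsum : limsup a l + b₀ ≤ a₀ + b₀ :=
    calc limsup a l + b₀ ≤ limsup a l + liminf b l := by gcongr
      _ ≤ limsup (a + b) l := limsup_add_liminf_le
      _ = a₀ + b₀ := hab.limsup_eq
  exact (ENNReal.add_le_add_iff_right (ENNReal.add_ne_top.1 hfin).2).1 hsum

theorem tendsto_of_le_liminf_of_eventually_le_add [l.NeBot] {κ : Type*} {m : Filter κ} [m.NeBot]
    {c : κ → ι → ℝ≥0∞} {c₀ ε : κ → ℝ≥0∞} (ha : a₀ ≤ liminf a l)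
    (hc : ∀ k, Tendsto (c k) l (𝓝 (c₀ k))) (hc₀ : ∀ k, c₀ k ≤ a₀) (hε : Tendsto ε m (𝓝 0))
    (hac : ∀ᶠ k in m, ∀ i, a i ≤ c k i + ε k) : Tendsto a l (𝓝 a₀) := by
  refine tendsto_of_le_liminf_of_limsup_le ha ?_
  have hlimsup : ∀ᶠ k in m, limsup a l ≤ a₀ + ε k := by
    filter_upwards [hac] with k hk
    calc limsup a l ≤ limsup (fun i ↦ c k i + ε k) l := limsup_le_limsup (.of_forall hk)
      _ = c₀ k + ε k := ((hc k).add_const (ε k)).limsup_eq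
      _ ≤ a₀ + ε k := by gcongr; exact hc₀ k
  simpa using ge_of_tendsto (hε.const_add a₀) hlimsup

end Limits

section Lebesgue

variable {α : Type*} [MeasurableSpace α] {μ : Measure α} {u : ℕ → α → ℝ≥0∞} {u₀ : α → ℝ≥0∞}

theorem lintegral_mul_le_liminf_lintegral_mul {g : α → ℝ≥0∞} (hu : ∀ n, AEMeasurable (u n) μ)
    (hg : AEMeasurable g μ) (hlim : ∀ᵐ x ∂μ, Tendsto (u · x) atTop (𝓝 (u₀ x))) :
    ∫⁻ x, u₀ x * g x ∂μ ≤ liminf (fun n ↦ ∫⁻ x, u n x * g x ∂μ) atTop :=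
  calc ∫⁻ x, u₀ x * g x ∂μ ≤ ∫⁻ x, liminf (fun n ↦ u n x * g x) atTop ∂μ := by
        refine lintegral_mono_ae ?_
        filter_upwards [hlim] with x hx
        rcases eq_or_ne (u₀ x) 0 with h0 | h0
        · simp [h0]
        · exact (ENNReal.Tendsto.mul_const hx (.inl h0)).liminf_eq.ge
    _ ≤ liminf (fun n ↦ ∫⁻ x, u n x * g x ∂μ) atTop :=
        lintegral_liminf_le' fun n ↦ (hu n).mul hg

theorem tendsto_lintegral_mul_of_le {g G : α → ℝ≥0∞} (hu : ∀ n, AEMeasurable (u n) μ)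
    (hu₀ : AEMeasurable u₀ μ) (hg : AEMeasurable g μ) (hG : AEMeasurable G μ) (hgG : g ≤ G)
    (hlim : ∀ᵐ x ∂μ, Tendsto (u · x) atTop (𝓝 (u₀ x)))
    (hfin : ∫⁻ x, u₀ x * G x ∂μ ≠ ⊤)
    (hG_lim : Tendsto (fun n ↦ ∫⁻ x, u n x * G x ∂μ) atTop (𝓝 (∫⁻ x, u₀ x * G x ∂μ))) :
    Tendsto (fun n ↦ ∫⁻ x, u n x * g x ∂μ) atTop (𝓝 (∫⁻ x, u₀ x * g x ∂μ)) := by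
  have hsplit (v : α → ℝ≥0∞) (hv : AEMeasurable v μ) :
      ∫⁻ x, v x * G x ∂μ = ∫⁻ x, v x * g x ∂μ + ∫⁻ x, v x * (G x - g x) ∂μ := by
    rw [← lintegral_add_left' (by fun_prop)]
    simp only [← mul_add, add_tsub_cancel_of_le (hgG _)]
  simp only [hsplit _ (hu _), hsplit _ hu₀] at hG_lim hfin
  exact tendsto_of_tendsto_add_of_le_liminf hG_lim hfin
    (lintegral_mul_le_liminf_lintegral_mul hu hg hlim)
    (lintegral_mul_le_liminf_lintegral_mul hu (hG.sub hg) hlim)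

theorem rpow_sub_one_mul_self {p : ℝ} (hp : 1 ≤ p) (a : ℝ≥0∞) : a ^ (p - 1) * a = a ^ p := by
  nth_rw 2 [← ENNReal.rpow_one a]
  rw [← ENNReal.rpow_add_of_nonneg _ _ (sub_nonneg.2 hp) zero_le_one, sub_add_cancel]

-- Where `a` exceeds the truncation level `L * b ^ (q - 1)`, the product `a * b` is at most a small
-- multiple of `a ^ p`.
theorem mul_le_min_mul_add_rpow {p q : ℝ} (hpq : p.HolderConjugate q) {L : ℝ≥0∞} (hL : L ≠ 0)
    (hL' : L ≠ ⊤) (a b : ℝ≥0∞) :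
    a * b ≤ min a (L * b ^ (q - 1)) * b + L⁻¹ ^ (p - 1) * a ^ p := by
  rcases le_total a (L * b ^ (q - 1)) with hab | hab
  · rw [min_eq_left hab]
    exact le_self_add
  have hexp : (q - 1) * (p - 1) = 1 := by linear_combination hpq.mul_eq_add
  have hb : b ≤ L⁻¹ ^ (p - 1) * a ^ (p - 1) :=
    calc b = (b ^ (q - 1)) ^ (p - 1) := by rw [← ENNReal.rpow_mul, hexp, ENNReal.rpow_one]
      _ ≤ (L⁻¹ * a) ^ (p - 1) :=
          ENNReal.rpow_le_rpow ((ENNReal.mul_le_iff_le_inv hL hL').1 hab) hpq.sub_one_pos.le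
      _ = L⁻¹ ^ (p - 1) * a ^ (p - 1) := ENNReal.mul_rpow_of_nonneg _ _ hpq.sub_one_pos.le
  calc a * b ≤ a * (L⁻¹ ^ (p - 1) * a ^ (p - 1)) := by gcongr
    _ = L⁻¹ ^ (p - 1) * a ^ p := by
        rw [mul_comm, mul_assoc, rpow_sub_one_mul_self hpq.lt.le]
    _ ≤ _ := le_add_self

theorem lintegral_le_of_tendsto_ae {F : ℕ → α → ℝ≥0∞} {F₀ : α → ℝ≥0∞} {M : ℝ≥0∞}
    (hF : ∀ n, AEMeasurable (F n) μ) (hlim : ∀ᵐ x ∂μ, Tendsto (F · x) atTop (𝓝 (F₀ x)))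
    (hM : ∀ n, ∫⁻ x, F n x ∂μ ≤ M) : ∫⁻ x, F₀ x ∂μ ≤ M :=
  calc ∫⁻ x, F₀ x ∂μ ≤ liminf (fun n ↦ ∫⁻ x, F n x ∂μ) atTop := by
        simpa using lintegral_mul_le_liminf_lintegral_mul hF aemeasurable_one hlim
    _ ≤ liminf (fun _ ↦ M) (atTop : Filter ℕ) := liminf_le_liminf (.of_forall hM)
    _ = M := liminf_const M

theorem tendsto_lintegral_min_mul {q : ℝ} (hq : 1 ≤ q) {g : α → ℝ≥0∞} {L : ℝ≥0∞} (hL : L ≠ ⊤)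
    (hu : ∀ n, AEMeasurable (u n) μ) (hg : AEMeasurable g μ)
    (hlim : ∀ᵐ x ∂μ, Tendsto (u · x) atTop (𝓝 (u₀ x))) (hg_fin : ∫⁻ x, g x ^ q ∂μ ≠ ⊤) :
    Tendsto (fun n ↦ ∫⁻ x, min (u n x) (L * g x ^ (q - 1)) * g x ∂μ) atTop
      (𝓝 (∫⁻ x, min (u₀ x) (L * g x ^ (q - 1)) * g x ∂μ)) := by
  refine tendsto_lintegral_of_dominated_convergence' (fun x ↦ L * g x ^ q)
    (fun n ↦ by fun_prop) (fun n ↦ .of_forall fun x ↦ ?_) ?_ ?_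
  · calc min (u n x) (L * g x ^ (q - 1)) * g x ≤ L * g x ^ (q - 1) * g x := by
          gcongr; exact min_le_right _ _
      _ = L * g x ^ q := by rw [mul_assoc, rpow_sub_one_mul_self hq]
  · rw [lintegral_const_mul' _ _ hL]
    exact mul_ne_top hL hg_fin
  · filter_upwards [hlim, ae_lt_top' (hg.pow_const q) hg_fin] with x hx hgx
    have hgx' : g x < ⊤ := (ENNReal.rpow_lt_top_iff_of_pos (zero_lt_one.trans_le hq)).1 hgx
    exact ENNReal.Tendsto.mul_const (hx.min tendsto_const_nhds) (.inr hgx'.ne)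

theorem tendsto_lintegral_mul_of_lintegral_rpow_le {p q : ℝ} (hpq : p.HolderConjugate q)
    {g : α → ℝ≥0∞} {M : ℝ≥0∞} (hu : ∀ n, AEMeasurable (u n) μ) (hg : AEMeasurable g μ)
    (hlim : ∀ᵐ x ∂μ, Tendsto (u · x) atTop (𝓝 (u₀ x))) (hM : M ≠ ⊤)
    (hu_le : ∀ n, ∫⁻ x, u n x ^ p ∂μ ≤ M) (hg_fin : ∫⁻ x, g x ^ q ∂μ ≠ ⊤) :
    Tendsto (fun n ↦ ∫⁻ x, u n x * g x ∂μ) atTop (𝓝 (∫⁻ x, u₀ x * g x ∂μ)) := by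
  have herror : Tendsto (fun L : ℕ ↦ (L : ℝ≥0∞)⁻¹ ^ (p - 1) * M) atTop (𝓝 0) := by
    have := ENNReal.tendsto_inv_nat_nhds_zero.ennrpow_const (p - 1)
    rw [ENNReal.zero_rpow_of_pos hpq.sub_one_pos] at this
    simpa using ENNReal.Tendsto.mul_const this (.inr hM)
  refine tendsto_of_le_liminf_of_eventually_le_add
    (lintegral_mul_le_liminf_lintegral_mul hu hg hlim)
    (fun L ↦ tendsto_lintegral_min_mul hpq.symm.lt.le (natCast_ne_top L) hu hg hlim hg_fin)
    (fun L ↦ lintegral_mono fun x ↦ by dsimp only; gcongr; exact min_le_left _ _) herror ?_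
  filter_upwards [eventually_ne_atTop 0] with L hL n
  calc ∫⁻ x, u n x * g x ∂μ
      ≤ ∫⁻ x, (min (u n x) (L * g x ^ (q - 1)) * g x + (L : ℝ≥0∞)⁻¹ ^ (p - 1) * u n x ^ p) ∂μ :=
        lintegral_mono fun x ↦
          mul_le_min_mul_add_rpow hpq (Nat.cast_ne_zero.2 hL) (natCast_ne_top L) _ _
    _ = ∫⁻ x, min (u n x) (L * g x ^ (q - 1)) * g x ∂μ +
          (L : ℝ≥0∞)⁻¹ ^ (p - 1) * ∫⁻ x, u n x ^ p ∂μ := by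
        rw [lintegral_add_left' (by fun_prop), lintegral_const_mul'' _ (by fun_prop)]
    _ ≤ _ := by gcongr; exact hu_le n

end Lebesgue

section MixedEnergy

variable {X Q : Type*} [MeasurableSpace X] [MeasurableSpace Q]

/-- The potential `x ↦ ∫ K(x, y) v(y) dμ(y)` of the density `v` with respect to the kernel `K`. -/
def potential (μ : Measure X) (K : X → X → ℝ≥0∞) (v : X → ℝ≥0∞) (x : X) : ℝ≥0∞ :=
  ∫⁻ y, v y * K x y ∂μ

/-- The mutual energy `∬ u(x) v(y) K(x, y) dμ(x) dμ(y)` of the densities `u` and `v` with respect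
to the kernel `K`. The Riesz energy of `g` is the case `u = v = |g|²`, `K(x, y) = |x - y|^{-λ}`. -/
def mixedEnergy (μ : Measure X) (K : X → X → ℝ≥0∞) (u v : X → ℝ≥0∞) : ℝ≥0∞ :=
  ∫⁻ x, ∫⁻ y, u x * v y * K x y ∂μ ∂μ

/-- A family of subsets of `X` indexed by `Q` is encoded by its incidence relation `S ⊆ X × Q`.
The overlap kernel at `(x, y)` is the `ν`-measure of the set of indices of those members of the
family that contain both `x` and `y`. -/
def overlapKernel (ν : Measure Q) (S : Set (X × Q)) (x y : X) : ℝ≥0∞ :=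
  ν {q | (x, q) ∈ S ∧ (y, q) ∈ S}

variable {μ : Measure X} {ν : Measure Q} {S : Set (X × Q)} {K J : X → X → ℝ≥0∞}
  {u v : X → ℝ≥0∞}

theorem measurable_potential [SFinite μ] (hK : Measurable (Function.uncurry K))
    (hv : Measurable v) : Measurable (potential μ K v) :=
  Measurable.lintegral_prod_right (f := fun x y ↦ v y * K x y)
    ((hv.comp measurable_snd).mul hK)

theorem mixedEnergy_eq_lintegral_mul_potential (hK : Measurable (Function.uncurry K))
    (hv : Measurable v) : mixedEnergy μ K u v = ∫⁻ x, u x * potential μ K v x ∂μ := by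
  refine lintegral_congr fun x ↦ ?_
  rw [potential, ← lintegral_const_mul _ (hv.fun_mul hK.of_uncurry_left)]
  simp only [mul_assoc]

theorem potential_le_const_mul {C : ℝ≥0∞} (hC : C ≠ ⊤) {x : X}
    (hKJ : ∀ᵐ y ∂μ, K x y ≤ C * J x y) : potential μ K v x ≤ C * potential μ J v x := by
  rw [potential, potential, ← lintegral_const_mul' _ _ hC]
  refine lintegral_mono_ae ?_
  filter_upwards [hKJ] with y hy
  calc v y * K x y ≤ v y * (C * J x y) := by gcongr
    _ = C * (v y * J x y) := mul_left_comm _ _ _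

theorem mixedEnergy_le_const_mul (hK : Measurable (Function.uncurry K))
    (hJ : Measurable (Function.uncurry J)) (hv : Measurable v) {C : ℝ≥0∞} (hC : C ≠ ⊤)
    (hKJ : ∀ x, ∀ᵐ y ∂μ, K x y ≤ C * J x y) :
    mixedEnergy μ K u v ≤ C * mixedEnergy μ J u v := by
  rw [mixedEnergy_eq_lintegral_mul_potential hK hv, mixedEnergy_eq_lintegral_mul_potential hJ hv,
    ← lintegral_const_mul' _ _ hC]
  refine lintegral_mono fun x ↦ ?_
  calc u x * potential μ K v x ≤ u x * (C * potential μ J v x) := by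
        gcongr; exact potential_le_const_mul hC (hKJ x)
    _ = C * (u x * potential μ J v x) := mul_left_comm _ _ _

theorem measurable_overlapKernel [SFinite ν] (hS : MeasurableSet S) :
    Measurable (Function.uncurry (overlapKernel ν S)) :=
  measurable_measure_prodMk_left (s := {z : (X × X) × Q | (z.1.1, z.2) ∈ S ∧ (z.1.2, z.2) ∈ S})
    ((hS.preimage (by fun_prop)).inter (hS.preimage (by fun_prop)))

theorem lintegral_indicator_prodMk (hS : MeasurableSet S) (w : X → ℝ≥0∞) (q : Q) :
    ∫⁻ x, S.indicator (fun z ↦ w z.1) (x, q) ∂μ = ∫⁻ x in (·, q) ⁻¹' S, w x ∂μ := by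
  rw [← lintegral_indicator (hS.preimage measurable_prodMk_right)]
  rfl

theorem measurable_setLIntegral_slice [SFinite μ] (hS : MeasurableSet S) (hv : Measurable v) :
    Measurable fun q ↦ ∫⁻ x in (·, q) ⁻¹' S, v x ∂μ := by
  simp only [← lintegral_indicator_prodMk hS]
  exact ((hv.comp measurable_fst).indicator hS).lintegral_prod_left'

theorem mul_mul_overlapKernel (hS : MeasurableSet S) (u v : X → ℝ≥0∞) (x y : X) :
    u x * v y * overlapKernel ν S x y =
      ∫⁻ q, S.indicator (fun z ↦ u z.1) (x, q) * S.indicator (fun z ↦ v z.1) (y, q) ∂ν := by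
  have hT : MeasurableSet {q | (x, q) ∈ S ∧ (y, q) ∈ S} :=
    (hS.preimage measurable_prodMk_left).inter (hS.preimage measurable_prodMk_left)
  rw [overlapKernel, ← lintegral_indicator_const hT]
  refine lintegral_congr fun q ↦ ?_
  by_cases hx : (x, q) ∈ S <;> by_cases hy : (y, q) ∈ S <;> simp [hx, hy]

theorem mixedEnergy_overlapKernel [SFinite μ] [SFinite ν] (hS : MeasurableSet S)
    (hu : Measurable u) (hv : Measurable v) :
    mixedEnergy μ (overlapKernel ν S) u v =
      ∫⁻ q, (∫⁻ x in (·, q) ⁻¹' S, u x ∂μ) * ∫⁻ x in (·, q) ⁻¹' S, v x ∂μ ∂ν := by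
  let U : X → Q → ℝ≥0∞ := fun x q ↦ S.indicator (fun z ↦ u z.1) (x, q)
  let V : X → Q → ℝ≥0∞ := fun x q ↦ S.indicator (fun z ↦ v z.1) (x, q)
  have hU : Measurable (Function.uncurry U) := (hu.comp measurable_fst).indicator hS
  have hV : Measurable (Function.uncurry V) := (hv.comp measurable_fst).indicator hS
  calc mixedEnergy μ (overlapKernel ν S) u v
      = ∫⁻ x, ∫⁻ y, ∫⁻ q, U x q * V y q ∂ν ∂μ ∂μ := by
        simp only [mixedEnergy, mul_mul_overlapKernel hS, U, V]
    _ = ∫⁻ x, ∫⁻ q, ∫⁻ y, U x q * V y q ∂μ ∂ν ∂μ := by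
        refine lintegral_congr fun x ↦ lintegral_lintegral_swap ?_
        fun_prop
    _ = ∫⁻ x, ∫⁻ q, U x q * ∫⁻ y, V y q ∂μ ∂ν ∂μ := by
        simp only [lintegral_const_mul _ hV.of_uncurry_right]
    _ = ∫⁻ q, ∫⁻ x, U x q * ∫⁻ y, V y q ∂μ ∂μ ∂ν := by
        refine lintegral_lintegral_swap (hU.mul ?_).aemeasurable
        exact hV.lintegral_prod_left.comp measurable_snd
    _ = ∫⁻ q, (∫⁻ x, U x q ∂μ) * ∫⁻ y, V y q ∂μ ∂ν := by
        simp only [lintegral_mul_const _ hU.of_uncurry_right]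
    _ = _ := by simp only [U, V, lintegral_indicator_prodMk hS]

variable {f : ℕ → X → ℝ≥0∞} {f₀ : X → ℝ≥0∞} {C M : ℝ≥0∞}

theorem tendsto_mixedEnergy_of_kernel_le [SFinite μ] (hK : Measurable (Function.uncurry K))
    (hJ : Measurable (Function.uncurry J)) (hf : ∀ n, Measurable (f n)) (hf₀ : Measurable f₀)
    (hv : Measurable v) (hC : C ≠ ⊤) (hKJ : ∀ x, ∀ᵐ y ∂μ, K x y ≤ C * J x y)
    (hlim : ∀ᵐ x ∂μ, Tendsto (f · x) atTop (𝓝 (f₀ x))) (hfin : mixedEnergy μ J f₀ v ≠ ⊤)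
    (hJ_lim : Tendsto (fun n ↦ mixedEnergy μ J (f n) v) atTop (𝓝 (mixedEnergy μ J f₀ v))) :
    Tendsto (fun n ↦ mixedEnergy μ K (f n) v) atTop (𝓝 (mixedEnergy μ K f₀ v)) := by
  have hscale (w : X → ℝ≥0∞) :
      ∫⁻ x, w x * (C * potential μ J v x) ∂μ = C * mixedEnergy μ J w v := by
    rw [mixedEnergy_eq_lintegral_mul_potential hJ hv, ← lintegral_const_mul' _ _ hC]
    simp only [mul_left_comm]
  simp only [mixedEnergy_eq_lintegral_mul_potential hK hv]
  refine tendsto_lintegral_mul_of_le (fun n ↦ (hf n).aemeasurable) hf₀.aemeasurable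
    (measurable_potential hK hv).aemeasurable
    ((measurable_potential hJ hv).const_mul C).aemeasurable
    (fun x ↦ potential_le_const_mul hC (hKJ x)) hlim ?_ ?_
  · rw [hscale]
    exact mul_ne_top hC hfin
  · simp only [hscale]
    exact ENNReal.Tendsto.const_mul hJ_lim (.inr hC)

theorem tendsto_mixedEnergy_overlapKernel [SFinite μ] [SFinite ν] (hS : MeasurableSet S)
    (hf : ∀ n, Measurable (f n)) (hf₀ : Measurable f₀)
    (hslice : ∀ᵐ q ∂ν, Tendsto (fun n ↦ ∫⁻ x in (·, q) ⁻¹' S, f n x ∂μ) atTop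
      (𝓝 (∫⁻ x in (·, q) ⁻¹' S, f₀ x ∂μ)))
    (hM : M ≠ ⊤) (henergy : ∀ n, mixedEnergy μ (overlapKernel ν S) (f n) (f n) ≤ M) :
    mixedEnergy μ (overlapKernel ν S) f₀ f₀ ≠ ⊤ ∧
      Tendsto (fun n ↦ mixedEnergy μ (overlapKernel ν S) (f n) f₀) atTop
        (𝓝 (mixedEnergy μ (overlapKernel ν S) f₀ f₀)) := by
  have hmeas {w : X → ℝ≥0∞} (hw : Measurable w) :
      AEMeasurable (fun q ↦ ∫⁻ x in (·, q) ⁻¹' S, w x ∂μ) ν :=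
    (measurable_setLIntegral_slice hS hw).aemeasurable
  simp only [mixedEnergy_overlapKernel hS (hf _) (hf _), ← sq, ← ENNReal.rpow_two] at henergy
  have hfin : ∫⁻ q, (∫⁻ x in (·, q) ⁻¹' S, f₀ x ∂μ) ^ (2 : ℝ) ∂ν ≠ ⊤ := by
    refine ne_top_of_le_ne_top hM
      (lintegral_le_of_tendsto_ae (fun n ↦ (hmeas (hf n)).pow_const 2) ?_ henergy)
    filter_upwards [hslice] with q hq using hq.ennrpow_const 2
  simp only [mixedEnergy_overlapKernel hS (hf _) hf₀, mixedEnergy_overlapKernel hS hf₀ hf₀]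
  refine ⟨by simpa only [← sq, ← ENNReal.rpow_two] using hfin, ?_⟩
  exact tendsto_lintegral_mul_of_lintegral_rpow_le .two_two (fun n ↦ hmeas (hf n)) (hmeas hf₀)
    hslice hM henergy hfin

theorem tendsto_mixedEnergy_of_comparable_overlapKernel [SFinite μ] [SFinite ν]
    (hS : MeasurableSet S) (hK : Measurable (Function.uncurry K)) (hf : ∀ n, Measurable (f n))
    (hf₀ : Measurable f₀) (hlim : ∀ᵐ x ∂μ, Tendsto (f · x) atTop (𝓝 (f₀ x)))
    (hslice : ∀ᵐ q ∂ν, Tendsto (fun n ↦ ∫⁻ x in (·, q) ⁻¹' S, f n x ∂μ) atTop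
      (𝓝 (∫⁻ x in (·, q) ⁻¹' S, f₀ x ∂μ)))
    (hM : M ≠ ⊤) (henergy : ∀ n, mixedEnergy μ K (f n) (f n) ≤ M)
    (hle : ∃ C ≠ ⊤, ∀ x, ∀ᵐ y ∂μ, K x y ≤ C * overlapKernel ν S x y)
    (hge : ∃ C ≠ ⊤, ∀ x, ∀ᵐ y ∂μ, overlapKernel ν S x y ≤ C * K x y) :
    Tendsto (fun n ↦ mixedEnergy μ K (f n) f₀) atTop (𝓝 (mixedEnergy μ K f₀ f₀)) := by
  obtain ⟨C₁, hC₁, hle⟩ := hle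
  obtain ⟨C₂, hC₂, hge⟩ := hge
  have hJ := measurable_overlapKernel (ν := ν) hS
  have henergy' (n : ℕ) : mixedEnergy μ (overlapKernel ν S) (f n) (f n) ≤ C₂ * M :=
    (mixedEnergy_le_const_mul hJ hK (hf n) hC₂ hge).trans (by gcongr; exact henergy n)
  obtain ⟨hfin, hJ_lim⟩ :=
    tendsto_mixedEnergy_overlapKernel hS hf hf₀ hslice (mul_ne_top hC₂ hM) henergy'
  exact tendsto_mixedEnergy_of_kernel_le hK hJ hf hf₀ hf₀ hC₁ hle hlim hfin hJ_lim

end MixedEnergy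

section RieszKernel

variable {E : Type*} [NormedAddCommGroup E] {lam : ℝ}

/-- The Riesz kernel `|x - y|^{-λ}`. By the conventions of `Real.rpow` it takes the value `0`
on the diagonal when `λ ≠ 0`. -/
def rieszKernel (lam : ℝ) (x y : E) : ℝ≥0∞ :=
  ENNReal.ofReal (‖x - y‖ ^ (-lam))

/-- The incidence relation of the family of open balls: the index `(r, c)` stands for the ball of
radius `r` and centre `c`. -/
def ballIncidence (E : Type*) [PseudoMetricSpace E] : Set (E × (ℝ × E)) :=
  {z | z.1 ∈ Metric.ball z.2.2 z.2.1}

/-- The measure `r^{-λ-d-1} dr dμ(c)` on the space of balls, where `d` is the dimension of `E`. The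
power of `r` makes its overlap kernel homogeneous of degree `-λ`. -/
def ballMeasure [NormedSpace ℝ E] [MeasurableSpace E] (μ : Measure E) (lam : ℝ) : Measure (ℝ × E) :=
  ((volume.restrict (Ioi 0)).withDensity
    fun r ↦ ENNReal.ofReal (r ^ (-lam - Module.finrank ℝ E - 1))).prod μ

variable [MeasurableSpace E]

theorem measurableSet_ballIncidence [SecondCountableTopology E] [OpensMeasurableSpace E] :
    MeasurableSet (ballIncidence E) :=
  measurableSet_lt (measurable_fst.dist measurable_snd.snd) measurable_snd.fst

theorem measurable_rieszKernel [SecondCountableTopology E] [OpensMeasurableSpace E] :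
    Measurable (Function.uncurry (rieszKernel (E := E) lam)) := by
  simp only [Function.uncurry_def, rieszKernel, ← dist_eq_norm]
  fun_prop

theorem lintegral_Ioi_rpow_neg_sub_one (hlam : 0 < lam) {c : ℝ} (hc : 0 < c) :
    ∫⁻ r in Ioi c, ENNReal.ofReal (r ^ (-lam - 1)) = ENNReal.ofReal (c ^ (-lam) / lam) := by
  have hnonneg : ∀ᵐ r ∂volume.restrict (Ioi c), 0 ≤ r ^ (-lam - 1) := by
    filter_upwards [ae_restrict_mem measurableSet_Ioi] with r hr
    exact Real.rpow_nonneg (hc.trans hr).le _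
  rw [← ofReal_integral_eq_lintegral_ofReal (integrableOn_Ioi_rpow_of_lt (by linarith) hc) hnonneg,
    integral_Ioi_rpow_of_lt (by linarith) hc, sub_add_cancel, neg_div_neg_eq]

variable [NormedSpace ℝ E] {μ : Measure E}

theorem overlapKernel_ballMeasure [SecondCountableTopology E] [OpensMeasurableSpace E] [SFinite μ]
    (x y : E) :
    overlapKernel (ballMeasure μ lam) (ballIncidence E) x y =
      ∫⁻ r in Ioi (0 : ℝ), ENNReal.ofReal (r ^ (-lam - Module.finrank ℝ E - 1)) *
        μ (Metric.ball x r ∩ Metric.ball y r) := by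
  have hmeas : MeasurableSet {q | (x, q) ∈ ballIncidence E ∧ (y, q) ∈ ballIncidence E} :=
    (measurableSet_ballIncidence.preimage measurable_prodMk_left).inter
      (measurableSet_ballIncidence.preimage measurable_prodMk_left)
  rw [overlapKernel, ballMeasure, Measure.prod_apply hmeas,
    lintegral_withDensity_eq_lintegral_mul _ (by fun_prop) (measurable_measure_prodMk_left hmeas)]
  refine lintegral_congr fun r ↦ congrArg (_ * μ ·) ?_
  ext c
  simp [ballIncidence, dist_comm c]

variable [FiniteDimensional ℝ E] [BorelSpace E] [μ.IsAddHaarMeasure]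

theorem rpow_mul_addHaar_ball {r t : ℝ} (hr : 0 < r) (ht : 0 < t) (x : E) :
    ENNReal.ofReal (r ^ (-lam - Module.finrank ℝ E - 1)) * μ (Metric.ball x (t * r)) =
      ENNReal.ofReal (t ^ Module.finrank ℝ E) * μ (Metric.ball 0 1) *
        ENNReal.ofReal (r ^ (-lam - 1)) := by
  have hpow : r ^ (-lam - Module.finrank ℝ E - 1) * r ^ Module.finrank ℝ E = r ^ (-lam - 1) := by
    rw [← Real.rpow_natCast, ← Real.rpow_add hr]
    ring_nf
  rw [Measure.addHaar_ball_of_pos μ x (mul_pos ht hr), mul_pow, ← hpow,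
    ENNReal.ofReal_mul (by positivity), ENNReal.ofReal_mul (by positivity)]
  ring

theorem lintegral_Ioi_rpow_mul_addHaar_ball (hlam : 0 < lam) {s t : ℝ} (hs : 0 < s) (ht : 0 < t)
    {x y : E} (hxy : x ≠ y) :
    ∫⁻ r in Ioi (s * ‖x - y‖), ENNReal.ofReal (r ^ (-lam - Module.finrank ℝ E - 1)) *
        μ (Metric.ball x (t * r)) =
      ENNReal.ofReal (t ^ Module.finrank ℝ E) * μ (Metric.ball 0 1) *
        ENNReal.ofReal (s ^ (-lam) / lam) * rieszKernel lam x y := by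
  have hdist : 0 < s * ‖x - y‖ := mul_pos hs (norm_sub_pos_iff.2 hxy)
  rw [setLIntegral_congr_fun measurableSet_Ioi
      fun r hr ↦ rpow_mul_addHaar_ball (hdist.trans hr) ht x,
    lintegral_const_mul _ (by fun_prop), lintegral_Ioi_rpow_neg_sub_one hlam hdist,
    Real.mul_rpow hs.le (norm_nonneg _), mul_div_right_comm, ENNReal.ofReal_mul (by positivity),
    ← mul_assoc, rieszKernel]

theorem overlapKernel_ballMeasure_le (hlam : 0 < lam) {x y : E} (hxy : x ≠ y) :
    overlapKernel (ballMeasure μ lam) (ballIncidence E) x y ≤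
      μ (Metric.ball 0 1) * ENNReal.ofReal ((1 / 2) ^ (-lam) / lam) * rieszKernel lam x y := by
  have hdisjoint {r : ℝ} (hr : r ≤ 1 / 2 * ‖x - y‖) : Metric.ball x r ∩ Metric.ball y r = ∅ := by
    refine (Metric.ball_disjoint_ball ?_).inter_eq
    rw [dist_eq_norm]
    linarith
  calc overlapKernel (ballMeasure μ lam) (ballIncidence E) x y
      ≤ ∫⁻ r in Ioi (1 / 2 * ‖x - y‖),
          ENNReal.ofReal (r ^ (-lam - Module.finrank ℝ E - 1)) * μ (Metric.ball x (1 * r)) := by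
        rw [overlapKernel_ballMeasure, ← lintegral_indicator measurableSet_Ioi,
          ← lintegral_indicator measurableSet_Ioi]
        refine lintegral_mono fun r ↦ ?_
        by_cases hr : r ∈ Ioi (1 / 2 * ‖x - y‖)
        · rw [indicator_of_mem hr, one_mul]
          exact (indicator_le_self _ _ r).trans (by gcongr; exact inter_subset_left)
        · simp [indicator, hdisjoint (not_lt.1 hr)]
    _ = _ := by
        rw [lintegral_Ioi_rpow_mul_addHaar_ball hlam one_half_pos one_pos hxy, one_pow,
          ENNReal.ofReal_one, one_mul]

theorem le_overlapKernel_ballMeasure (hlam : 0 < lam) {x y : E} (hxy : x ≠ y) :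
    ENNReal.ofReal ((1 / 2) ^ Module.finrank ℝ E) * μ (Metric.ball 0 1) *
        ENNReal.ofReal (2 ^ (-lam) / lam) * rieszKernel lam x y ≤
      overlapKernel (ballMeasure μ lam) (ballIncidence E) x y := by
  rw [← lintegral_Ioi_rpow_mul_addHaar_ball hlam two_pos one_half_pos hxy,
    overlapKernel_ballMeasure]
  have hIoi : Ioi (2 * ‖x - y‖) ⊆ Ioi 0 := Ioi_subset_Ioi (by positivity)
  refine (setLIntegral_mono' measurableSet_Ioi fun r hr ↦ ?_).trans (lintegral_mono_set hIoi)
  have hr' : 2 * ‖x - y‖ < r := hr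
  have hr₀ : 0 < r := hIoi hr
  gcongr
  refine subset_inter (Metric.ball_subset_ball (by linarith)) (Metric.ball_subset_ball' ?_)
  rw [dist_eq_norm]
  linarith

theorem exists_overlapKernel_ballMeasure_le [Nontrivial E] (hlam : 0 < lam) :
    ∃ C ≠ ⊤, ∀ x, ∀ᵐ y ∂μ,
      overlapKernel (ballMeasure μ lam) (ballIncidence E) x y ≤ C * rieszKernel lam x y := by
  refine ⟨μ (Metric.ball 0 1) * ENNReal.ofReal ((1 / 2) ^ (-lam) / lam),
    mul_ne_top measure_ball_lt_top.ne ofReal_ne_top, fun x ↦ ?_⟩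
  filter_upwards [Measure.ae_ne μ x] with y hy
  exact overlapKernel_ballMeasure_le hlam hy.symm

theorem exists_rieszKernel_le_overlapKernel_ballMeasure (hlam : 0 < lam) :
    ∃ C ≠ ⊤, ∀ x y : E,
      rieszKernel lam x y ≤ C * overlapKernel (ballMeasure μ lam) (ballIncidence E) x y := by
  have hball := Metric.measure_ball_pos μ (0 : E) one_pos
  have hC : ENNReal.ofReal ((1 / 2) ^ Module.finrank ℝ E) * μ (Metric.ball 0 1) *
      ENNReal.ofReal (2 ^ (-lam) / lam) ≠ 0 := by
    have : 0 < (2 : ℝ) ^ (-lam) / lam := by positivity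
    simp [hball.ne', this]
  refine ⟨_, ENNReal.inv_ne_top.2 hC, fun x y ↦ ?_⟩
  rcases eq_or_ne x y with rfl | hxy
  · simp [rieszKernel, hlam.ne']
  · refine (ENNReal.mul_le_iff_le_inv hC ?_).1 (le_overlapKernel_ballMeasure hlam hxy)
    finiteness

end RieszKernel

section LpBounded

variable {α F : Type*} [MeasurableSpace α] {μ : Measure α} [NormedAddCommGroup F]
  {f : ℕ → α → F} {f₀ : α → F} {p B : ℝ≥0∞}

theorem lintegral_enorm_rpow_le_of_eLpNorm_le {g : α → F}
    (hg : AEStronglyMeasurable g μ) {r : ℝ} (hr : 0 < r) (hrp : ENNReal.ofReal r ≤ p)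
    (hB : eLpNorm g p μ ≤ B) :
    ∫⁻ x, ‖g x‖ₑ ^ r ∂μ ≤ (B * μ univ ^ (r⁻¹ - p.toReal⁻¹)) ^ r := by
  have hr' : eLpNorm g (ENNReal.ofReal r) μ ≤ B * μ univ ^ (r⁻¹ - p.toReal⁻¹) := by
    have := eLpNorm_le_eLpNorm_mul_rpow_measure_univ hrp hg
    rw [ENNReal.toReal_ofReal hr.le, one_div, one_div] at this
    exact this.trans (by gcongr)
  rwa [eLpNorm_eq_lintegral_rpow_enorm_toReal (by simpa) ofReal_ne_top,
    ENNReal.toReal_ofReal hr.le, one_div, ENNReal.rpow_inv_le_iff hr] at hr'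

theorem tendsto_lintegral_enorm_rpow_of_eLpNorm_le [IsFiniteMeasure μ] {q : ℝ} (hq : 0 < q)
    (hqp : ENNReal.ofReal q < p) (hf : ∀ n, AEStronglyMeasurable (f n) μ)
    (hlim : ∀ᵐ x ∂μ, Tendsto (f · x) atTop (𝓝 (f₀ x))) (hB : B ≠ ⊤)
    (hf_le : ∀ n, eLpNorm (f n) p μ ≤ B) :
    Tendsto (fun n ↦ ∫⁻ x, ‖f n x‖ₑ ^ q ∂μ) atTop (𝓝 (∫⁻ x, ‖f₀ x‖ₑ ^ q ∂μ)) := by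
  obtain ⟨r, hqr, hrp⟩ : ∃ r : ℝ, q < r ∧ ENNReal.ofReal r ≤ p := by
    obtain ⟨r, hqr, hrp⟩ := ENNReal.lt_iff_exists_nnreal_btwn.1 hqp
    rw [← ENNReal.ofReal_coe_nnreal] at hqr hrp
    exact ⟨r, (ENNReal.ofReal_lt_ofReal_iff_of_nonneg hq.le).1 hqr, hrp.le⟩
  have hr : 0 < r := hq.trans hqr
  have hconj := Real.HolderConjugate.conjExponent ((one_lt_div hq).2 hqr)
  have hbound (n : ℕ) : ∫⁻ x, (‖f n x‖ₑ ^ q) ^ (r / q) ∂μ ≤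
      (B * μ univ ^ (r⁻¹ - p.toReal⁻¹)) ^ r := by
    simp only [← ENNReal.rpow_mul, mul_div_cancel₀ r hq.ne']
    exact lintegral_enorm_rpow_le_of_eLpNorm_le (hf n) hr hrp (hf_le n)
  have hexp : p.toReal⁻¹ ≤ r⁻¹ := by
    rcases eq_or_ne p ⊤ with rfl | hp
    · simpa using hr.le
    · exact inv_anti₀ hr ((ENNReal.ofReal_le_iff_le_toReal hp).1 hrp)
  have hfin : (B * μ univ ^ (r⁻¹ - p.toReal⁻¹)) ^ r ≠ ⊤ :=
    ENNReal.rpow_ne_top_of_nonneg hr.le <| mul_ne_top hB <|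
      ENNReal.rpow_ne_top_of_nonneg (sub_nonneg.2 hexp) (measure_ne_top μ univ)
  simpa using tendsto_lintegral_mul_of_lintegral_rpow_le (g := fun _ ↦ 1) hconj
    (fun n ↦ (hf n).enorm.pow_const q) aemeasurable_const
    (hlim.mono fun x hx ↦ hx.enorm.ennrpow_const q) hfin hbound (by simp)

end LpBounded

theorem riesz_mixed_term_converges_general {E F : Type*} [NormedAddCommGroup E] [NormedSpace ℝ E]
    [FiniteDimensional ℝ E] [Nontrivial E] [MeasurableSpace E] [BorelSpace E] {μ : Measure E}
    [μ.IsAddHaarMeasure] [NormedAddCommGroup F] {lam : ℝ} (hlam : 0 < lam) {p : ℝ≥0∞} (hp : 2 < p)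
    {f : ℕ → E → F} {f₀ : E → F} (hf : ∀ n, StronglyMeasurable (f n))
    (hf₀ : StronglyMeasurable f₀) (hlim : ∀ᵐ x ∂μ, Tendsto (f · x) atTop (𝓝 (f₀ x)))
    (hriesz : ∃ M < ⊤, ∀ n, mixedEnergy μ (rieszKernel lam) (‖f n ·‖ₑ ^ 2) (‖f n ·‖ₑ ^ 2) ≤ M)
    (hLp : ∃ B < ⊤, ∀ n, eLpNorm (f n) p μ ≤ B) :
    Tendsto (fun n ↦ mixedEnergy μ (rieszKernel lam) (‖f n ·‖ₑ ^ 2) (‖f₀ ·‖ₑ ^ 2)) atTop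
      (𝓝 (mixedEnergy μ (rieszKernel lam) (‖f₀ ·‖ₑ ^ 2) (‖f₀ ·‖ₑ ^ 2))) := by
  obtain ⟨M, hM, henergy⟩ := hriesz
  obtain ⟨B, hB, hf_le⟩ := hLp
  obtain ⟨C, hC, hle⟩ := exists_rieszKernel_le_overlapKernel_ballMeasure (μ := μ) hlam
  have hball (x : E) (r : ℝ) : Tendsto (fun n ↦ ∫⁻ y in Metric.ball x r, ‖f n y‖ₑ ^ 2 ∂μ) atTop
      (𝓝 (∫⁻ y in Metric.ball x r, ‖f₀ y‖ₑ ^ 2 ∂μ)) := by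
    have : IsFiniteMeasure (μ.restrict (Metric.ball x r)) := ⟨by simp [measure_ball_lt_top]⟩
    simpa using tendsto_lintegral_enorm_rpow_of_eLpNorm_le two_pos (by simpa using hp)
      (fun n ↦ (hf n).aestronglyMeasurable) (ae_restrict_of_ae hlim) hB.ne
      fun n ↦ (eLpNorm_restrict_le _ _ _ _).trans (hf_le n)
  have : SFinite (ballMeasure μ lam) := by unfold ballMeasure; infer_instance
  exact tendsto_mixedEnergy_of_comparable_overlapKernel measurableSet_ballIncidence
    measurable_rieszKernel (fun n ↦ (hf n).enorm.pow_const 2) (hf₀.enorm.pow_const 2)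
    (hlim.mono fun x hx ↦ ENNReal.Tendsto.pow hx.enorm) (.of_forall fun q ↦ hball q.2 q.1)
    hM.ne henergy ⟨C, hC, fun x ↦ .of_forall (hle x)⟩ (exists_overlapKernel_ballMeasure_le hlam)

/-- If `f_n → f` a.e., the Riesz energies of the `f_n` are uniformly bounded and the `L^p`
norms of the `f_n` are uniformly bounded (`2 < p < ∞`), then
`∬ |f_n(x)|² |f(y)|² |x-y|^{-λ} dx dy → ∬ |f(x)|² |f(y)|² |x-y|^{-λ} dx dy`. -/
theorem riesz_mixed_term_converges
    (d : ℕ) (hd : 1 ≤ d) (lam p : ℝ) (hlam₀ : 0 < lam) (hlam₁ : lam < d) (hp : 2 < p)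
    (f : ℕ → EuclideanSpace ℝ (Fin d) → ℂ) (f₀ : EuclideanSpace ℝ (Fin d) → ℂ)
    (hmeas : ∀ n, Measurable (f n)) (hmeas₀ : Measurable f₀)
    (hae : ∀ᵐ x : EuclideanSpace ℝ (Fin d), Tendsto (fun n => f n x) atTop (nhds (f₀ x)))
    (hriesz : ∃ M : ℝ≥0∞, M < ⊤ ∧ ∀ n, rieszEnergy d lam (f n) ≤ M)
    (hLp : ∃ B : ℝ≥0∞, B < ⊤ ∧ ∀ n, eLpNorm (f n) (ENNReal.ofReal p) volume ≤ B) :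
    Tendsto (fun n => ∫⁻ x, ∫⁻ y, (‖f n x‖₊ : ℝ≥0∞) ^ 2 * (‖f₀ y‖₊ : ℝ≥0∞) ^ 2 *
        ENNReal.ofReal (‖x - y‖ ^ (-lam)))
      atTop (nhds (rieszEnergy d lam f₀)) := by
  have : Nonempty (Fin d) := ⟨⟨0, hd⟩⟩
  exact riesz_mixed_term_converges_general hlam₀ (by simpa using hp)
    (fun n ↦ (hmeas n).stronglyMeasurable) hmeas₀.stronglyMeasurable hae hriesz hLp
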